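/- arXiv:1804.07058 — 3 statements merged into one kernel-verified Lean document; each statement's English description precedes it below -/
import Mathlib

section
/- Let A = {1, x, ..., x^d} on ℝ. Then every moment sequence s ∈ ℝ^{d+1} arising from a finite measure on ℝ with finite moments up to degree d has a representing measure that is a sum of at most ⌈(d+1)/2⌉ Dirac measures with positive weights. -/
open MeasureTheory

/-!
If a nonzero polynomial of degree at most `n = ⌊d / 2⌋` vanishes `μ`-almost everywhere, then `μ` is
carried by its at most `n` roots. Otherwise the moment functional `L` is positive definite on the
polynomials of degree at most `n`, and `⟪p, q⟫ = L (p * q)` is an inner product there. The operator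
`T` given by `⟪T p, q⟫ = L (X * p * q)` is symmetric and maps `X ^ i` to `X ^ (i + 1)` for `i < n`,
whence `L p = ⟪p(T) 1, 1⟫` up to degree `2 * n + 1`. Diagonalizing `T` turns the right-hand side
into a sum over its `n + 1` eigenvalues.
-/

open Polynomial

open scoped InnerProductSpace

section Compression

variable {R A : Type*} [CommRing R] [CommRing A] [Algebra R A]

/-- The bilinear form `(p, q) ↦ L (p * q)` on `W`, whose Gram matrices are the Hankel matrices of
`L` when `W` is a space of polynomials. -/
def productForm (L : A →ₗ[R] R) (W : Submodule R A) : LinearMap.BilinForm R W :=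
  ((LinearMap.mul R A).compr₂ L).domRestrict₁₂ W W

theorem productForm_apply (L : A →ₗ[R] R) (W : Submodule R A) (p q : W) :
    productForm L W p q = L (p * q) := rfl

/-- `T` is the compression to `W` of multiplication by `a`, with respect to `productForm L W`. -/
def IsCompression (L : A →ₗ[R] R) (W : Submodule R A) (a : A) (T : Module.End R W) : Prop :=
  ∀ p q : W, L (T p * q) = L (a * p * q)

theorem exists_isCompression {K : Type*} [Field K] [Algebra K A] {L : A →ₗ[K] K}
    {W : Submodule K A} [FiniteDimensional K W] (hL : (productForm L W).Nondegenerate) (a : A) :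
    ∃ T, IsCompression L W a T := by
  let B := productForm (L ∘ₗ LinearMap.mulLeft K a) W
  refine ⟨B.symmCompOfNondegenerate (productForm L W) hL, fun p q => ?_⟩
  calc L (B.symmCompOfNondegenerate (productForm L W) hL p * q)
      = B p q := B.symmCompOfNondegenerate_left_apply hL q p
    _ = L (a * p * q) := congrArg L (mul_assoc a (p : A) q).symm

namespace IsCompression

variable {L : A →ₗ[R] R} {W : Submodule R A} {a : A} {T : Module.End R W}

theorem map_apply_mul_comm (hT : IsCompression L W a T) (p q : W) : L (T p * q) = L (p * T q) := by
  rw [hT, mul_comm (p : A), hT, mul_right_comm]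

theorem map_pow_apply_mul_comm (hT : IsCompression L W a T) (i : ℕ) (p q : W) :
    L ((T ^ i) p * q) = L (p * (T ^ i) q) := by
  induction i generalizing q with
  | zero => rfl
  | succ i ih =>
    calc L ((T ^ (i + 1)) p * q)
        = L (T ((T ^ i) p) * q) := by rw [pow_succ', Module.End.mul_apply]
      _ = L ((T ^ i) p * T q) := hT.map_apply_mul_comm _ q
      _ = L (p * (T ^ i) (T q)) := ih (T q)
      _ = L (p * (T ^ (i + 1)) q) := by rw [pow_succ, Module.End.mul_apply]

theorem apply_eq_mul (hT : IsCompression L W a T) (hL : (productForm L W).Nondegenerate) {p : W}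
    (hp : a * p ∈ W) : (T p : A) = a * p := by
  refine congrArg Subtype.val (sub_eq_zero.1 (hL.1 (T p - ⟨a * p, hp⟩) fun q => ?_))
  rw [map_sub, LinearMap.sub_apply, productForm_apply, productForm_apply, hT, sub_self]

end IsCompression

end Compression

theorem X_pow_mem_degreeLT {R : Type*} [Semiring R] {i n : ℕ} (h : i < n) :
    (X ^ i : R[X]) ∈ degreeLT R n :=
  mem_degreeLT.2 ((degree_X_pow_le i).trans_lt (by exact_mod_cast h))

theorem eqOn_degreeLT_of_X_pow {R M : Type*} [Semiring R] [AddCommMonoid M] [Module R M]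
    {f g : R[X] →ₗ[R] M} {n : ℕ} (h : ∀ i < n, f (X ^ i) = g (X ^ i)) :
    Set.EqOn f g (degreeLT R n) := by
  classical
  rw [degreeLT_eq_span_X_pow]
  refine LinearMap.eqOn_span' fun p hp => ?_
  obtain ⟨i, hi, rfl⟩ := Finset.mem_image.1 hp
  exact h i (Finset.mem_range.1 hi)

namespace IsCompression

variable {R : Type*} [CommRing R] {L : R[X] →ₗ[R] R} {n : ℕ}
  {T : Module.End R (degreeLT R (n + 1))} {e : degreeLT R (n + 1)}

theorem pow_apply_one (hT : IsCompression L (degreeLT R (n + 1)) X T)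
    (hL : (productForm L (degreeLT R (n + 1))).Nondegenerate) (he : (e : R[X]) = 1)
    {i : ℕ} (hi : i ≤ n) : ((T ^ i) e : R[X]) = X ^ i := by
  induction i with
  | zero => exact he
  | succ i ih =>
    have ih := ih (by omega)
    have hmem : X * ((T ^ i) e : R[X]) ∈ degreeLT R (n + 1) := by
      rw [ih, ← pow_succ']
      exact X_pow_mem_degreeLT (by omega)
    rw [pow_succ', Module.End.mul_apply, hT.apply_eq_mul hL hmem, ih, pow_succ']

theorem aeval_apply_one (hT : IsCompression L (degreeLT R (n + 1)) X T)
    (hL : (productForm L (degreeLT R (n + 1))).Nondegenerate) (he : (e : R[X]) = 1)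
    (p : degreeLT R (n + 1)) : aeval T (p : R[X]) e = p := by
  let orbit : R[X] →ₗ[R] degreeLT R (n + 1) := (aeval T).toLinearMap.flip e
  have h : Set.EqOn ((degreeLT R (n + 1)).subtype ∘ₗ orbit) LinearMap.id (degreeLT R (n + 1)) :=
    eqOn_degreeLT_of_X_pow fun i hi => by
      simpa [orbit] using hT.pow_apply_one hL he (Nat.le_of_lt_succ hi)
  exact Subtype.ext (h p.2)

-- `T ^ (n + 1)` cannot send `1` to `X ^ (n + 1)`, but it does so when tested by `L` against
-- polynomials of degree at most `n`; this gains the top degree `2 * n + 1`.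
theorem map_pow_apply_one_mul (hT : IsCompression L (degreeLT R (n + 1)) X T)
    (hL : (productForm L (degreeLT R (n + 1))).Nondegenerate) (he : (e : R[X]) = 1)
    {i : ℕ} (hi : i ≤ n + 1) (q : degreeLT R (n + 1)) :
    L ((T ^ i) e * q) = L (X ^ i * (q : R[X])) := by
  cases i with
  | zero => rw [pow_zero, Module.End.one_apply, he, pow_zero]
  | succ i => rw [pow_succ', Module.End.mul_apply, hT, hT.pow_apply_one hL he (by omega), pow_succ']

theorem map_aeval_apply_one (hT : IsCompression L (degreeLT R (n + 1)) X T)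
    (hL : (productForm L (degreeLT R (n + 1))).Nondegenerate) (he : (e : R[X]) = 1)
    {p : R[X]} (hp : p ∈ degreeLT R (2 * n + 2)) : L (aeval T p e) = L p := by
  let orbit : R[X] →ₗ[R] degreeLT R (n + 1) := (aeval T).toLinearMap.flip e
  have h : Set.EqOn (L ∘ₗ (degreeLT R (n + 1)).subtype ∘ₗ orbit) L (degreeLT R (2 * n + 2)) :=
    eqOn_degreeLT_of_X_pow fun i hi => by
      obtain ⟨j, k, hj, hk, rfl⟩ : ∃ j k, j ≤ n ∧ k ≤ n + 1 ∧ i = j + k :=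
        ⟨i / 2, i - i / 2, by omega, by omega, by omega⟩
      calc L (orbit (X ^ (j + k)))
          = L ((T ^ j) ((T ^ k) e) * e) := by simp [orbit, he, pow_add]
        _ = L ((T ^ k) e * (T ^ j) e) := hT.map_pow_apply_mul_comm j _ e
        _ = L (X ^ k * X ^ j) := by
          rw [hT.map_pow_apply_one_mul hL he hk, hT.pow_apply_one hL he hj]
        _ = L (X ^ (j + k)) := by rw [add_comm, pow_add]
  exact h hp

end IsCompression

theorem isSymmetric_aeval {V : Type*} [SeminormedAddCommGroup V] [InnerProductSpace ℝ V]
    {T : Module.End ℝ V} (hT : T.IsSymmetric) (p : ℝ[X]) : (aeval T p).IsSymmetric := by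
  induction p using Polynomial.induction_on' with
  | add p q hp hq => rw [map_add]; exact hp.add hq
  | monomial i a =>
    rw [← smul_X_eq_monomial, map_smul, map_pow, aeval_X]
    exact (hT.pow i).smul (conj_trivial a)

theorem exists_quadrature_of_isSymmetric {V : Type*} [NormedAddCommGroup V]
    [InnerProductSpace ℝ V] [FiniteDimensional ℝ V] {m : ℕ} (hm : Module.finrank ℝ V = m)
    {T : Module.End ℝ V} (hT : T.IsSymmetric) {v : V} (hv : ∀ w, ∃ p : ℝ[X], aeval T p v = w) :
    ∃ c x : Fin m → ℝ, (∀ j, 0 < c j) ∧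
      ∀ p : ℝ[X], ⟪aeval T p v, v⟫_ℝ = ∑ j, c j * p.eval (x j) := by
  let b := hT.eigenvectorBasis hm
  let x := hT.eigenvalues hm
  have hb (p : ℝ[X]) (j) : ⟪aeval T p v, b j⟫_ℝ = p.eval (x j) * ⟪v, b j⟫_ℝ := by
    have heigen : aeval T p (b j) = p.eval (x j) • b j :=
      Module.End.aeval_apply_of_hasEigenvector (hT.hasEigenvector_eigenvectorBasis hm j)
    rw [isSymmetric_aeval hT p, heigen, real_inner_smul_right]
  have hne (j) : ⟪v, b j⟫_ℝ ≠ 0 := fun h0 => by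
    obtain ⟨p, hp⟩ := hv (b j)
    have := hb p j
    rw [hp, h0, mul_zero, inner_self_eq_zero] at this
    exact b.orthonormal.ne_zero j this
  refine ⟨fun j => ⟪v, b j⟫_ℝ ^ 2, x, fun j => by have := hne j; positivity, fun p => ?_⟩
  rw [← b.sum_inner_mul_inner]
  refine Finset.sum_congr rfl fun j _ => ?_
  rw [hb, real_inner_comm v (b j)]
  ring

/-- Strict positivity of `L` on the nonzero squares of elements of `W`; for `W` the polynomials of
bounded degree this says that the Hankel matrix of `L` is positive definite. -/
def IsPosDefOn {A : Type*} [CommRing A] [Algebra ℝ A] (L : A →ₗ[ℝ] ℝ) (W : Submodule ℝ A) : Prop :=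
  ∀ p ∈ W, p ≠ 0 → 0 < L (p * p)

namespace IsPosDefOn

variable {A : Type*} [CommRing A] [Algebra ℝ A] {L : A →ₗ[ℝ] ℝ} {W : Submodule ℝ A}

/-- The inner product `⟪p, q⟫ = L (p * q)` on `W`. -/
abbrev innerProductCore (hL : IsPosDefOn L W) : InnerProductSpace.Core ℝ W where
  inner p q := L (p * q)
  conj_inner_symm p q := congrArg L (mul_comm (q : A) p)
  re_inner_nonneg p := by
    by_cases hp : (p : A) = 0
    · simp [hp]
    · exact (hL p p.2 hp).le
  add_left p q r := by simp [add_mul]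
  smul_left p q r := by simp
  definite p hp := by
    by_contra hne
    exact (hL p p.2 (by simpa using hne)).ne' hp

theorem nondegenerate (hL : IsPosDefOn L W) : (productForm L W).Nondegenerate := by
  have hsymm : (productForm L W).IsSymm := ⟨fun p q => congrArg L (mul_comm (p : A) q)⟩
  exact hsymm.isRefl.nondegenerate_iff_separatingLeft.2 fun p hp =>
    hL.innerProductCore.definite p (hp p)

end IsPosDefOn

theorem exists_gauss_quadrature {L : ℝ[X] →ₗ[ℝ] ℝ} {n : ℕ}
    (hL : IsPosDefOn L (degreeLT ℝ (n + 1))) :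
    ∃ c x : Fin (n + 1) → ℝ, (∀ j, 0 < c j) ∧
      ∀ p ∈ degreeLT ℝ (2 * n + 2), L p = ∑ j, c j * p.eval (x j) := by
  let _ : NormedAddCommGroup (degreeLT ℝ (n + 1)) := hL.innerProductCore.toNormedAddCommGroup
  let _ : InnerProductSpace ℝ (degreeLT ℝ (n + 1)) :=
    InnerProductSpace.ofCore hL.innerProductCore.toCore
  have hrank : Module.finrank ℝ (degreeLT ℝ (n + 1)) = n + 1 := by
    simpa using Module.finrank_eq_card_basis (degreeLT.basis ℝ (n + 1))
  have : FiniteDimensional ℝ (degreeLT ℝ (n + 1)) :=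
    (degreeLT.basis ℝ (n + 1)).finiteDimensional_of_finite
  obtain ⟨T, hT⟩ := exists_isCompression hL.nondegenerate X
  let e : degreeLT ℝ (n + 1) := ⟨X ^ 0, X_pow_mem_degreeLT n.succ_pos⟩
  have he : (e : ℝ[X]) = 1 := pow_zero X
  obtain ⟨c, x, hc, hsum⟩ := exists_quadrature_of_isSymmetric hrank (T := T) (v := e)
    hT.map_apply_mul_comm fun p => ⟨p, hT.aeval_apply_one hL.nondegenerate he p⟩
  refine ⟨c, x, hc, fun p hp => ?_⟩
  calc L p = L (aeval T p e) := (hT.map_aeval_apply_one hL.nondegenerate he hp).symm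
    _ = L (aeval T p e * e) := by rw [he, mul_one]
    _ = ∑ j, c j * p.eval (x j) := hsum p

/-- The Riesz functional of `μ`, sending `X ^ i` to the `i`-th moment. A divergent moment gets the
junk value `0`; this does no harm to the quadrature argument, which for moments up to an even degree
`2 * n` needs some value in degree `2 * n + 1`, and works with any. -/
noncomputable def momentFunctional (μ : Measure ℝ) : ℝ[X] →ₗ[ℝ] ℝ :=
  lsum fun i => LinearMap.toSpanSingleton ℝ ℝ (∫ t, t ^ i ∂μ)

theorem momentFunctional_X_pow (μ : Measure ℝ) (i : ℕ) :
    momentFunctional μ (X ^ i) = ∫ t, t ^ i ∂μ := by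
  simp [momentFunctional, X_pow_eq_monomial]

theorem integrable_eval {μ : Measure ℝ} {p : ℝ[X]}
    (hμ : ∀ i ≤ p.natDegree, Integrable (fun t : ℝ => t ^ i) μ) :
    Integrable (fun t => p.eval t) μ := by
  simp only [eval_eq_sum_range]
  exact integrable_finsetSum _ fun i hi =>
    (hμ i (Nat.le_of_lt_succ (Finset.mem_range.1 hi))).const_mul _

theorem momentFunctional_eq_integral {μ : Measure ℝ} {p : ℝ[X]}
    (hμ : ∀ i ≤ p.natDegree, Integrable (fun t : ℝ => t ^ i) μ) :
    momentFunctional μ p = ∫ t, p.eval t ∂μ := by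
  simp only [eval_eq_sum_range]
  rw [integral_finsetSum _ fun i hi =>
    (hμ i (Nat.le_of_lt_succ (Finset.mem_range.1 hi))).const_mul _]
  simp only [integral_const_mul, momentFunctional, lsum_apply]
  rw [sum_over_range _ (by simp)]
  simp

theorem isPosDefOn_or_exists_finset {μ : Measure ℝ} {n : ℕ}
    (hμ : ∀ i ≤ 2 * n, Integrable (fun t : ℝ => t ^ i) μ) :
    IsPosDefOn (momentFunctional μ) (degreeLT ℝ (n + 1)) ∨
      ∃ s : Finset ℝ, s.card ≤ n ∧ ∀ᵐ t ∂μ, t ∈ s := by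
  refine or_iff_not_imp_left.2 fun hL => ?_
  obtain ⟨p, hp, hp0, hLp⟩ : ∃ p ∈ degreeLT ℝ (n + 1), p ≠ 0 ∧ momentFunctional μ (p * p) ≤ 0 := by
    simpa [IsPosDefOn] using hL
  have hdeg : p.natDegree ≤ n :=
    Nat.le_of_lt_succ ((natDegree_lt_iff_degree_lt hp0).2 (mem_degreeLT.1 hp))
  have hμp : ∀ i ≤ (p * p).natDegree, Integrable (fun t : ℝ => t ^ i) μ := fun i hi =>
    hμ i (by have := natDegree_mul hp0 hp0; omega)
  have hzero : (fun t => (p * p).eval t) =ᵐ[μ] 0 := by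
    have hnonneg : 0 ≤ fun t => (p * p).eval t := fun t => by
      simp only [Pi.zero_apply, eval_mul, mul_self_nonneg]
    refine (integral_eq_zero_iff_of_nonneg hnonneg (integrable_eval hμp)).1
      (le_antisymm ?_ (integral_nonneg hnonneg))
    rwa [← momentFunctional_eq_integral hμp]
  refine ⟨p.roots.toFinset, (Multiset.toFinset_card_le _).trans (p.card_roots'.trans hdeg), ?_⟩
  filter_upwards [hzero] with t ht
  simpa [hp0] using ht

theorem exists_atoms_of_ae_mem_finset {α : Type*} [MeasurableSpace α] [MeasurableSingletonClass α]
    {μ : Measure α} [IsFiniteMeasure μ] {s : Finset α} (hs : ∀ᵐ a ∂μ, a ∈ s) :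
    ∃ k ≤ s.card, ∃ (c : Fin k → ℝ) (x : Fin k → α), (∀ j, 0 < c j) ∧
      ∀ f : α → ℝ, ∫ a, f a ∂μ = ∑ j, c j * f (x j) := by
  classical
  let t := s.filter fun a => μ.real {a} ≠ 0
  have ht (j : t) : 0 < μ.real {(j : α)} :=
    measureReal_nonneg.lt_of_ne' (Finset.mem_filter.1 j.2).2
  refine ⟨t.card, s.card_filter_le _, fun j => μ.real {(t.equivFin.symm j : α)},
    fun j => t.equivFin.symm j, fun j => ht _, fun f => ?_⟩
  calc ∫ a, f a ∂μ
      = ∫ a in s, f a ∂μ := by rw [Measure.restrict_eq_self_of_ae_mem (by simpa using hs)]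
    _ = ∑ a ∈ s, μ.real {a} * f a := setIntegral_finset s IntegrableOn.finset
    _ = ∑ a ∈ t, μ.real {a} * f a := (Finset.sum_filter_of_ne fun a _ => left_ne_zero_of_mul).symm
    _ = ∑ a : t, μ.real {(a : α)} * f a := (Finset.sum_coe_sort t fun a => μ.real {a} * f a).symm
    _ = ∑ j, μ.real {(t.equivFin.symm j : α)} * f (t.equivFin.symm j) :=
      (Equiv.sum_comp t.equivFin.symm fun a : t => μ.real {(a : α)} * f a).symm

/-- Richter's theorem: every truncated moment sequence of {1, x, …, x^d} on ℝ has a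
representing measure with at most ⌈(d+1)/2⌉ atoms. -/
theorem richter_univariate (d : ℕ) (μ : Measure ℝ) [IsFiniteMeasure μ]
    (hint : ∀ i ≤ d, Integrable (fun x : ℝ => x ^ i) μ) :
    ∃ k ≤ (d + 2) / 2, ∃ (c : Fin k → ℝ) (x : Fin k → ℝ),
      (∀ j, 0 < c j) ∧
      ∀ i ≤ d, (∫ t : ℝ, t ^ i ∂μ) = ∑ j, c j * x j ^ i := by
  rcases isPosDefOn_or_exists_finset (n := d / 2) fun i hi => hint i (by omega) with
    hL | ⟨s, hcard, hs⟩
  · obtain ⟨c, x, hc, hquad⟩ := exists_gauss_quadrature hL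
    refine ⟨d / 2 + 1, by omega, c, x, hc, fun i hi => ?_⟩
    have hmem : (X ^ i : ℝ[X]) ∈ degreeLT ℝ (2 * (d / 2) + 2) := X_pow_mem_degreeLT (by omega)
    simpa only [momentFunctional_X_pow, eval_pow, eval_X] using hquad _ hmem
  · obtain ⟨k, hk, c, x, hc, hatoms⟩ := exists_atoms_of_ae_mem_finset hs
    exact ⟨k, by omega, c, x, hc, fun i _ => hatoms fun t => t ^ i⟩
end

section
/- Let X, Σ be sets and b₁,...,b_m real-valued functions on X × Σ defined by b_i(x,σ) = ∫_X a_i dδ_{x,σ}, where δ_{x,σ} are probability measures with all |b_i(x,σ)| < ∞. Then for every measure μ on X × Σ with ∫ |b_i| dμ < ∞ for all i, there exist k ≤ m, weights c₁,...,c_k > 0 and parameters (x₁,σ₁),...,(x_k,σ_k) such that ∫ b_i dμ = Σ_{j=1}^k c_j b_i(x_j,σ_j) for all i = 1,...,m. -/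
open MeasureTheory

/-!
The integral of a function with values in a finite-dimensional space lies in every convex cone `C`
that contains almost all of its values, closed or not: pass to the smallest subspace `W` containing
almost all values. If the integral were outside `C ∩ W`, a nonzero functional on `W`, nonnegative on
the cone and nonpositive at the integral, would have to vanish at almost every value, so that its
kernel would be a smaller subspace than `W`. Applied to the cone generated by the values of
`(b₁, …, b_m)` this writes the moment vector as a conic combination of values, which Carathéodory's
argument reduces to at most `m` of them.
-/

section Separation

variable {V : Type*} [NormedAddCommGroup V] [NormedSpace ℝ V] [FiniteDimensional ℝ V]

theorem exists_dual_ne_zero_forall_le_of_convex_of_notMem {s : Set V} {x : V} (hs : Convex ℝ s)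
    (hne : s.Nonempty) (hx : x ∉ s) : ∃ l : StrongDual ℝ V, l ≠ 0 ∧ ∀ y ∈ s, l y ≤ l x := by
  by_cases hint : (interior s).Nonempty
  · exact geometric_hahn_banach_of_nonempty_interior_point hs (fun h ↦ hx (interior_subset h)) hint
  have hdir : vectorSpan ℝ s ≠ ⊤ := by
    rwa [hs.interior_nonempty_iff_affineSpan_eq_top,
      AffineSubspace.affineSpan_eq_top_iff_vectorSpan_eq_top_of_nonempty ℝ V V hne] at hint
  obtain ⟨l, hl, hker⟩ := Submodule.exists_le_ker_of_lt_top _ hdir.lt_top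
  obtain ⟨z, hz⟩ := hne
  have hconst : ∀ y ∈ s, l y = l z := fun y hy ↦ by
    simpa [sub_eq_zero] using hker (vsub_mem_vectorSpan ℝ hy hz)
  rcases le_total (l z) (l x) with h | h
  · exact ⟨l.toContinuousLinearMap, by simpa using hl, fun y hy ↦ by simpa [hconst y hy] using h⟩
  · exact ⟨-l.toContinuousLinearMap, by simpa using hl, fun y hy ↦ by simpa [hconst y hy] using h⟩

theorem exists_dual_ne_zero_nonneg_of_notMem_pointedCone {C : PointedCone ℝ V} {x : V}
    (hx : x ∉ C) : ∃ l : StrongDual ℝ V, l ≠ 0 ∧ (∀ y ∈ C, 0 ≤ l y) ∧ l x ≤ 0 := by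
  obtain ⟨l, hl, hle⟩ :=
    exists_dual_ne_zero_forall_le_of_convex_of_notMem C.convex ⟨0, C.zero_mem⟩ hx
  have hx_nonneg : 0 ≤ l x := by simpa using hle 0 C.zero_mem
  have hnonpos : ∀ y ∈ C, l y ≤ 0 := by
    intro y hy
    by_contra! hpos
    obtain ⟨n, hn⟩ := Archimedean.arch (l x + 1) hpos
    have hscaled : n • l y ≤ l x := by simpa using hle (n • y) (nsmul_mem hy n)
    linarith
  exact ⟨-l, neg_ne_zero.2 hl, by simpa using hnonpos, by simpa using hx_nonneg⟩

end Separation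

section Integral

variable {Ω V : Type*} [MeasurableSpace Ω] {μ : Measure Ω} [NormedAddCommGroup V] [NormedSpace ℝ V]
  [FiniteDimensional ℝ V] {f : Ω → V} {C : PointedCone ℝ V}

theorem exists_dual_ne_zero_comp_ae_eq_zero_of_integral_notMem_pointedCone (hf : Integrable f μ)
    (hfC : ∀ᵐ ω ∂μ, f ω ∈ C) (hC : ∫ ω, f ω ∂μ ∉ C) :
    ∃ l : StrongDual ℝ V, l ≠ 0 ∧ ∀ᵐ ω ∂μ, l (f ω) = 0 := by
  obtain ⟨l, hl, hnonneg, hle⟩ := exists_dual_ne_zero_nonneg_of_notMem_pointedCone hC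
  have hae : 0 ≤ᵐ[μ] fun ω ↦ l (f ω) := hfC.mono fun ω ↦ hnonneg (f ω)
  have hzero : ∫ ω, l (f ω) ∂μ = 0 :=
    le_antisymm (by rwa [l.integral_comp_comm hf]) (integral_nonneg_of_ae hae)
  exact ⟨l, hl, (integral_eq_zero_iff_of_nonneg_ae hae (l.integrable_comp hf)).1 hzero⟩

theorem integral_mem_pointedCone (hf : Integrable f μ) (hfC : ∀ᵐ ω ∂μ, f ω ∈ C) :
    ∫ ω, f ω ∂μ ∈ C := by
  obtain ⟨W, hfW, hmin⟩ : ∃ W : Submodule ℝ V, (∀ᵐ ω ∂μ, f ω ∈ W) ∧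
      ∀ W' : Submodule ℝ V, (∀ᵐ ω ∂μ, f ω ∈ W') → ¬W' < W :=
    wellFounded_lt.has_min {W : Submodule ℝ V | ∀ᵐ ω ∂μ, f ω ∈ W} ⟨⊤, by simp⟩
  obtain ⟨P, hP⟩ := W.subtype.exists_leftInverse_of_injective W.ker_subtype
  have hPW : ∀ x ∈ W, (P x : V) = x := fun x hx ↦
    congrArg Subtype.val (LinearMap.congr_fun hP ⟨x, hx⟩)
  have hPf : ∀ᵐ ω ∂μ, (P (f ω) : V) = f ω := hfW.mono fun ω ↦ hPW (f ω)
  have hPint : Integrable (fun ω ↦ P (f ω)) μ := P.toContinuousLinearMap.integrable_comp hf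
  have hcoe : ((∫ ω, P (f ω) ∂μ : W) : V) = ∫ ω, f ω ∂μ :=
    (W.subtypeL.integral_comp_comm hPint).symm.trans (integral_congr_ae hPf)
  by_contra hC
  obtain ⟨l, hl, hlf⟩ := exists_dual_ne_zero_comp_ae_eq_zero_of_integral_notMem_pointedCone
    (C := C.comap W.subtype) hPint
    (by filter_upwards [hfC, hPf] with ω hωC hω; simpa [hω] using hωC) (by simpa [hcoe] using hC)
  have hker : l.ker < ⊤ := lt_top_iff_ne_top.2 fun h ↦
    hl (ContinuousLinearMap.coe_injective (LinearMap.ker_eq_top.1 h))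
  refine hmin (l.ker.map W.subtype) ?_ ?_
  · filter_upwards [hlf, hPf] with ω hlω hω
    exact ⟨P (f ω), hlω, hω⟩
  · simpa using Submodule.map_strictMono_of_injective W.injective_subtype hker

end Integral

section Caratheodory

variable {𝕜 ι E : Type*} [Field 𝕜] [LinearOrder 𝕜] [IsStrictOrderedRing 𝕜] [AddCommGroup E]
  [Module 𝕜 E] {v : ι → E}

theorem exists_sum_smul_eq_zero_pos_of_not_linearIndepOn {s : Finset ι}
    (hs : ¬LinearIndepOn 𝕜 v (s : Set ι)) :
    ∃ g : ι → 𝕜, ∑ i ∈ s, g i • v i = 0 ∧ ∃ i ∈ s, 0 < g i := by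
  rw [linearIndepOn_finset_iff] at hs
  push Not at hs
  obtain ⟨g, hg, i, hi, hgi⟩ := hs
  rcases hgi.lt_or_gt with hneg | hpos
  · exact ⟨-g, by simp [hg], i, hi, by simpa using hneg⟩
  · exact ⟨g, hg, i, hi, hpos⟩

theorem exists_ssubset_sum_pos_smul_eq_of_not_linearIndepOn {s : Finset ι} {c : ι → 𝕜}
    (hc : ∀ i ∈ s, 0 < c i) (hs : ¬LinearIndepOn 𝕜 v (s : Set ι)) :
    ∃ t ⊂ s, ∃ d : ι → 𝕜, (∀ i ∈ t, 0 < d i) ∧ ∑ i ∈ t, d i • v i = ∑ i ∈ s, c i • v i := by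
  obtain ⟨g, hg, hpos⟩ := exists_sum_smul_eq_zero_pos_of_not_linearIndepOn hs
  -- Moving from `c` in direction `-g`, the coefficient at `j` is among the first to vanish.
  obtain ⟨j, hj, hmin⟩ := (s.filter (0 < g ·)).exists_min_image (fun i ↦ c i / g i)
    (by simpa [Finset.Nonempty] using hpos)
  obtain ⟨hjs, hgj⟩ := Finset.mem_filter.1 hj
  let d : ι → 𝕜 := fun i ↦ c i - c j / g j * g i
  have hdj : d j = 0 := by simp [d, hgj.ne']
  have hd : ∀ i ∈ s, 0 ≤ d i := by
    intro i hi
    rw [sub_nonneg]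
    rcases le_or_gt (g i) 0 with h | h
    · exact (mul_nonpos_of_nonneg_of_nonpos (div_nonneg (hc j hjs).le hgj.le) h).trans (hc i hi).le
    · exact (le_div_iff₀ h).1 (hmin i (Finset.mem_filter.2 ⟨hi, h⟩))
  have hsum : ∑ i ∈ s, d i • v i = ∑ i ∈ s, c i • v i := by
    simp only [d, sub_smul, mul_smul, Finset.sum_sub_distrib, ← Finset.smul_sum, hg, smul_zero,
      sub_zero]
  refine ⟨s.filter (0 < d ·), Finset.filter_ssubset.2 ⟨j, hjs, hdj.not_gt⟩, d,
    fun i hi ↦ (Finset.mem_filter.1 hi).2, ?_⟩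
  rw [← hsum]
  exact Finset.sum_filter_of_ne fun i hi hne ↦
    (hd i hi).lt_of_ne' (left_ne_zero_of_smul hne)

theorem exists_linearIndepOn_sum_pos_smul_eq (s : Finset ι) (c : ι → 𝕜) (hc : ∀ i ∈ s, 0 < c i) :
    ∃ (t : Finset ι) (d : ι → 𝕜), LinearIndepOn 𝕜 v (t : Set ι) ∧ (∀ i ∈ t, 0 < d i) ∧
      ∑ i ∈ t, d i • v i = ∑ i ∈ s, c i • v i := by
  induction s using Finset.strongInduction generalizing c with
  | H s ih =>
    by_cases hs : LinearIndepOn 𝕜 v (s : Set ι)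
    · exact ⟨s, c, hs, hc, rfl⟩
    obtain ⟨t, hts, d, hd, hsum⟩ := exists_ssubset_sum_pos_smul_eq_of_not_linearIndepOn hc hs
    simpa only [hsum] using ih t hts d hd

theorem exists_linearIndepOn_sum_pos_smul_eq_of_mem_hull_range {x : E}
    (hx : x ∈ PointedCone.hull 𝕜 (Set.range v)) :
    ∃ (t : Finset ι) (d : ι → 𝕜), LinearIndepOn 𝕜 v (t : Set ι) ∧ (∀ i ∈ t, 0 < d i) ∧
      ∑ i ∈ t, d i • v i = x := by
  obtain ⟨w, rfl⟩ := (Finsupp.mem_span_range_iff_exists_finsupp).1 hx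
  exact exists_linearIndepOn_sum_pos_smul_eq w.support (fun i ↦ (w i : 𝕜)) fun i hi ↦
    (w i).2.lt_of_ne' (Subtype.coe_ne_coe.2 (Finsupp.mem_support_iff.1 hi))

end Caratheodory

section Richter

variable {Ω : Type*} [MeasurableSpace Ω] {μ : Measure Ω}

theorem exists_linearIndepOn_sum_pos_smul_eq_integral {V : Type*} [NormedAddCommGroup V]
    [NormedSpace ℝ V] [FiniteDimensional ℝ V] {f : Ω → V} (hf : Integrable f μ) :
    ∃ (t : Finset Ω) (c : Ω → ℝ), LinearIndepOn ℝ f (t : Set Ω) ∧ (∀ ω ∈ t, 0 < c ω) ∧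
      ∑ ω ∈ t, c ω • f ω = ∫ ω, f ω ∂μ :=
  exists_linearIndepOn_sum_pos_smul_eq_of_mem_hull_range <| integral_mem_pointedCone hf <|
    .of_forall fun ω ↦ PointedCone.subset_hull ⟨ω, rfl⟩

theorem richter_mixtures_general {ι : Type*} [Fintype ι] {b : ι → Ω → ℝ}
    (hb : ∀ i, Integrable (b i) μ) :
    ∃ k ≤ Fintype.card ι, ∃ (c : Fin k → ℝ) (ξ : Fin k → Ω), (∀ j, 0 < c j) ∧
      ∀ i, ∫ ω, b i ω ∂μ = ∑ j, c j * b i (ξ j) := by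
  obtain ⟨t, c, hli, hc, hsum⟩ :=
    exists_linearIndepOn_sum_pos_smul_eq_integral (f := fun ω i ↦ b i ω) (.of_eval hb)
  have hcard : t.card ≤ Fintype.card ι := by
    simpa using hli.fintype_card_le_finrank
  refine ⟨t.card, hcard, fun j ↦ c (t.equivFin.symm j), fun j ↦ t.equivFin.symm j,
    fun j ↦ hc _ (t.equivFin.symm j).2, fun i ↦ ?_⟩
  calc ∫ ω, b i ω ∂μ = (∫ ω, fun i ↦ b i ω ∂μ) i := (eval_integral hb i).symm
    _ = ∑ ω ∈ t, c ω * b i ω := by simp [← hsum]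
    _ = ∑ ω : t, c ω * b i ω := (Finset.sum_coe_sort t fun ω ↦ c ω * b i ω).symm
    _ = ∑ j, c (t.equivFin.symm j) * b i (t.equivFin.symm j) :=
      (t.equivFin.symm.sum_comp fun ω : t ↦ c ω * b i ω).symm

end Richter

/-- Richter's theorem for mixtures: every moment sequence of a mixture measure μ on
X × Σ with respect to the moment functions b_i(x,σ) = ∫ a_i dδ_{x,σ} already arises
from a finite mixture with at most m components. -/
theorem richter_mixtures (X Y : Type*) [MeasurableSpace X] [MeasurableSpace Y]
    (m : ℕ) (a : Fin m → X → ℝ) (δ : X → Y → Measure X)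
    (hprob : ∀ x σ, IsProbabilityMeasure (δ x σ))
    (hfin : ∀ i x σ, Integrable (a i) (δ x σ))
    (μ : Measure (X × Y))
    (hint : ∀ i, Integrable (fun p : X × Y => ∫ y, a i y ∂ δ p.1 p.2) μ) :
    ∃ k ≤ m, ∃ (c : Fin k → ℝ) (ξ : Fin k → X × Y),
      (∀ j, 0 < c j) ∧
      ∀ i, (∫ p : X × Y, (∫ y, a i y ∂ δ p.1 p.2) ∂μ) =
        ∑ j, c j * ∫ y, a i y ∂ δ (ξ j).1 (ξ j).2 := by
  simpa only [Fintype.card_fin] using richter_mixtures_general hint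
end

section
/- Let d₁ < d₂ < ... < d_m be nonnegative integers and A = {x^{d₁}, ..., x^{d_m}} on X = (0,∞). Then the Carathéodory number of A equals ⌈m/2⌉: every moment sequence of a measure on (0,∞) with finite A-moments has a representing measure consisting of at most ⌈m/2⌉ Dirac measures at points of (0,∞), and ⌈m/2⌉ atoms are necessary for some moment sequences. -/
open MeasureTheory

open Filter Finset Polynomial Topology

/-!
On the cone spanned by the moment curve, linear functionals are polynomials with few monomials, and
by Descartes' rule of signs a polynomial with `n` monomials has fewer than `n` positive zeros,
counted with multiplicity.

Moment sequences lie in this cone: otherwise a separating functional would vanish almost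
everywhere, so the measure would be carried by the finitely many zeros of a polynomial and its
moments would be a conic combination of points of the curve after all.

To save half of the atoms, rescale the curve to `x γ(x) / (1 + x ^ M)`, which is compact once `0` is
added. Push a moment sequence along its ray to the boundary of the convex hull of this compact set
and support it there by a functional `f` with maximum `b`. The contact points are the positive zeros
of `b (1 + x ^ M) - x f(γ(x))`, a nonnegative polynomial with at most `m + 2` monomials. All these
zeros are double, so there are at most `(m + 1) / 2` of them, and they carry the sequence.

Conversely, any `m` points of the curve are linearly independent, so a sum of `⌈m / 2⌉` of them is
not a combination of fewer.
-/

section Descartes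

theorem signVariations_lt_card_support {p : ℝ[X]} (hp : p ≠ 0) :
    p.signVariations < #p.support := by
  induction hn : #p.support generalizing p with
  | zero => exact absurd (by simpa using hn) hp
  | succ n ih =>
    by_cases h : p.eraseLead = 0
    · have hmonomial := p.eraseLead_add_monomial_natDegree_leadingCoeff
      rw [h, zero_add] at hmonomial
      rw [← hmonomial, signVariations_monomial]
      exact n.succ_pos
    · have := ih h (card_support_eraseLead' hn)
      have := p.signVariations_le_eraseLead_succ
      omega

theorem mul_card_lt_card_support {p : ℝ[X]} (hp : p ≠ 0) {Z : Finset ℝ} (hZ : ∀ z ∈ Z, 0 < z)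
    {r : ℕ} (hr : ∀ z ∈ Z, r ≤ p.rootMultiplicity z) : r * #Z < #p.support := by
  have hle : r • Z.val ≤ p.roots.filter (0 < ·) := by
    refine Multiset.le_iff_count.2 fun z ↦ ?_
    by_cases hz : z ∈ Z
    · simpa [Multiset.count_filter_of_pos (hZ z hz), Multiset.count_eq_one_of_mem Z.nodup hz]
        using hr z hz
    · simp [Multiset.count_eq_zero_of_notMem (show z ∉ Z.val from hz)]
  calc r * #Z = (r • Z.val).card := by simp
    _ ≤ (p.roots.filter (0 < ·)).card := Multiset.card_le_card hle
    _ = p.roots.countP (0 < ·) := (Multiset.countP_eq_card_filter _ _).symm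
    _ ≤ p.signVariations := p.roots_countP_pos_le_signVariations
    _ < #p.support := signVariations_lt_card_support hp

theorem two_le_rootMultiplicity_of_isLocalMin {p : ℝ[X]} (hp : p ≠ 0) {z : ℝ} (hz : p.IsRoot z)
    (hmin : IsLocalMin p.eval z) : 2 ≤ p.rootMultiplicity z :=
  (one_lt_rootMultiplicity_iff_isRoot hp).2 ⟨hz, hmin.hasDerivAt_eq_zero (p.hasDerivAt z)⟩

theorem two_mul_card_pos_roots_lt_card_support {p : ℝ[X]} (hp : p ≠ 0)
    (hnonneg : ∀ x > 0, 0 ≤ p.eval x) :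
    2 * #{x ∈ p.roots.toFinset | 0 < x} < #p.support := by
  refine mul_card_lt_card_support hp (fun z hz ↦ (mem_filter.1 hz).2) fun z hz ↦ ?_
  obtain ⟨hroot, hz0⟩ := mem_filter.1 hz
  replace hroot : p.IsRoot z := by simpa [hp] using hroot
  refine two_le_rootMultiplicity_of_isLocalMin hp hroot ?_
  filter_upwards [Ioi_mem_nhds hz0] with x hx
  exact hroot.trans_le (hnonneg x hx)

end Descartes

section Convex

theorem mem_convexHull_face {E : Type*} [AddCommGroup E] [Module ℝ E] {S : Set E}
    {f : Module.Dual ℝ E} {y : E} (hy : y ∈ convexHull ℝ S) (hf : ∀ x ∈ S, f x ≤ f y) :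
    y ∈ convexHull ℝ {x ∈ S | f x = f y} := by
  suffices h : convexHull ℝ S ⊆
      {x | f x ≤ f y ∧ (f x = f y → x ∈ convexHull ℝ {x ∈ S | f x = f y})} from (h hy).2 rfl
  refine convexHull_min (fun x hx ↦ ⟨hf x hx, fun h ↦ subset_convexHull ℝ _ ⟨hx, h⟩⟩) ?_
  refine convex_iff_forall_pos.2 fun u ⟨hu, hu'⟩ v ⟨hv, hv'⟩ a b ha hb hab ↦ ?_
  have hcomb : f (a • u + b • v) = a * f u + b * f v := by simp
  have hfy : a * f y + b * f y = f y := by rw [← add_mul, hab, one_mul]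
  refine ⟨show f (a • u + b • v) ≤ f y by rw [hcomb]; nlinarith, fun h ↦ ?_⟩
  rw [hcomb] at h
  exact convex_convexHull ℝ _ (hu' (by nlinarith)) (hv' (by nlinarith)) ha.le hb.le hab

theorem exists_smul_mem_diff_interior {E : Type*} [NormedAddCommGroup E] [NormedSpace ℝ E]
    {C : Set E} (hC : IsCompact C) {s : E} (hs : s ≠ 0)
    {r₀ : ℝ} (hr₀ : r₀ • s ∈ C) : ∃ r ≥ r₀, r • s ∈ C ∧ r • s ∉ interior C := by
  have hemb := isClosedEmbedding_smul_left (𝕜 := ℝ) hs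
  obtain ⟨r, hrC, hr⟩ := (hemb.isCompact_preimage hC).exists_isGreatest ⟨r₀, hr₀⟩
  refine ⟨r, hr hr₀, hrC, fun hint ↦ ?_⟩
  have hnear : ∀ᶠ t in 𝓝[>] r, t • s ∈ C := nhdsWithin_le_nhds <|
    hemb.continuous.continuousAt.eventually (mem_interior_iff_mem_nhds.1 hint)
  obtain ⟨t, htC, hrt⟩ := (hnear.and self_mem_nhdsWithin).exists
  exact (hr htC).not_gt hrt

variable {E : Type*} [NormedAddCommGroup E] [NormedSpace ℝ E] [FiniteDimensional ℝ E]

theorem isCompact_convexHull {S : Set E} (hS : IsCompact S) : IsCompact (convexHull ℝ S) := by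
  let F (n : ℕ) (p : (Fin n → ℝ) × (Fin n → E)) : E := ∑ i, p.1 i • p.2 i
  have hunion : convexHull ℝ S = ⋃ n ∈ Set.Iic (Module.finrank ℝ E + 1),
      F n '' (stdSimplex ℝ (Fin n) ×ˢ Set.univ.pi fun _ ↦ S) := by
    refine Set.Subset.antisymm (fun x hx ↦ ?_) (Set.iUnion₂_subset fun n _ ↦ ?_)
    · obtain ⟨ι, _, z, w, hzS, hind, hw, hw1, rfl⟩ := eq_pos_convex_span_of_mem_convexHull hx
      let e := Fintype.equivFin ι
      have hcard : Fintype.card ι ≤ Module.finrank ℝ E + 1 :=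
        hind.card_le_finrank_succ.trans (by gcongr; exact Submodule.finrank_le _)
      refine Set.mem_biUnion hcard ⟨(w ∘ e.symm, z ∘ e.symm), ⟨⟨fun i ↦ (hw _).le, ?_⟩,
        fun i _ ↦ hzS ⟨_, rfl⟩⟩, e.symm.sum_comp fun i ↦ w i • z i⟩
      exact (e.symm.sum_comp w).trans hw1
    · rintro _ ⟨⟨w, z⟩, ⟨hw, hz⟩, rfl⟩
      exact mem_convexHull_of_exists_fintype w z hw.1 hw.2 (fun i ↦ hz i trivial) rfl
  rw [hunion]
  refine (Set.finite_Iic _).isCompact_biUnion fun n _ ↦ IsCompact.image ?_ (by fun_prop)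
  exact (isCompact_stdSimplex ℝ _).prod (isCompact_univ_pi fun _ ↦ hS)

theorem exists_dual_forall_le {C : Set E} (hC : Convex ℝ C) (hne : C.Nonempty) {s : E}
    (hs : s ∉ interior C) : ∃ f : Module.Dual ℝ E, f ≠ 0 ∧ ∀ y ∈ C, f y ≤ f s := by
  by_cases hint : (interior C).Nonempty
  · obtain ⟨f, hf0, hf⟩ := geometric_hahn_banach_of_nonempty_interior_point hC hs hint
    exact ⟨f, mod_cast hf0, hf⟩
  obtain ⟨y₀, hy₀⟩ := hne
  have hdir : (affineSpan ℝ C).direction < ⊤ := by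
    rw [hC.interior_nonempty_iff_affineSpan_eq_top] at hint
    refine lt_top_iff_ne_top.2 fun h ↦ hint ?_
    exact (AffineSubspace.direction_eq_top_iff_of_nonempty ⟨y₀, subset_affineSpan ℝ C hy₀⟩).1 h
  obtain ⟨g, hg0, hg⟩ := Submodule.exists_le_ker_of_lt_top _ hdir
  have hconst : ∀ y ∈ C, g y = g y₀ := fun y hy ↦ sub_eq_zero.1 <| by
    simpa using hg (AffineSubspace.vsub_mem_direction (subset_affineSpan ℝ C hy)
      (subset_affineSpan ℝ C hy₀))
  rcases le_total (g y₀) (g s) with h | h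
  · exact ⟨g, hg0, fun y hy ↦ (hconst y hy).trans_le h⟩
  · exact ⟨-g, neg_ne_zero.2 hg0, fun y hy ↦ neg_le_neg (h.trans_eq (hconst y hy).symm)⟩

theorem exists_dual_nonpos_of_notMem {C : PointedCone ℝ E} {s : E} (hs : s ∉ C) :
    ∃ f : Module.Dual ℝ E, f ≠ 0 ∧ (∀ y ∈ C, f y ≤ 0) ∧ 0 ≤ f s := by
  obtain ⟨f, hf0, hf⟩ := exists_dual_forall_le C.convex ⟨0, C.zero_mem⟩
    fun h ↦ hs (interior_subset h)
  have hfs : 0 ≤ f s := by simpa using hf 0 C.zero_mem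
  refine ⟨f, hf0, fun y hy ↦ not_lt.1 fun hy0 ↦ ?_, hfs⟩
  have hscale := hf _ (C.smul_mem (by positivity : 0 ≤ f s / f y + 1) hy)
  rw [map_smul, smul_eq_mul, add_mul, div_mul_cancel₀ _ hy0.ne'] at hscale
  linarith

end Convex

section Cone

variable {E : Type*} [AddCommGroup E] [Module ℝ E]

theorem exists_smul_mem_convexHull {S : Set E} (hS : (0 : E) ∈ S) {s : E}
    (hs : s ∈ PointedCone.hull ℝ S) : ∃ r > (0 : ℝ), r • s ∈ convexHull ℝ S := by
  let C := ConvexCone.hull ℝ (convexHull ℝ S)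
  have h0 : (0 : E) ∈ C := ConvexCone.subset_hull (subset_convexHull ℝ S hS)
  have hsC : s ∈ C := by
    have hle : PointedCone.hull ℝ S ≤ C.toPointedCone h0 :=
      Submodule.span_le.2 ((subset_convexHull ℝ S).trans ConvexCone.subset_hull)
    exact hle hs
  obtain ⟨r, hr, y, hy, rfl⟩ := (ConvexCone.mem_hull_of_convex (convex_convexHull ℝ S)).1 hsC
  exact ⟨r⁻¹, inv_pos.2 hr, by simpa [hr.ne'] using hy⟩

theorem exists_fin_of_mem_hull_image {α : Type*} {γ : α → E} {Z : Finset α} {s : E}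
    (hs : s ∈ PointedCone.hull ℝ (γ '' Z)) :
    ∃ k ≤ #Z, ∃ (c : Fin k → ℝ) (x : Fin k → α),
      (∀ j, 0 < c j ∧ x j ∈ Z) ∧ s = ∑ j, c j • γ (x j) := by
  classical
  obtain ⟨c, rfl⟩ := (Submodule.mem_span_image_finset_iff_exists_fun' _).1 hs
  let T := {z ∈ Z | c z ≠ 0}
  let e := T.equivFin
  refine ⟨#T, card_filter_le _ _, fun j ↦ c (e.symm j), fun j ↦ e.symm j, fun j ↦ ?_, ?_⟩
  · obtain ⟨hZ, hc⟩ := mem_filter.1 (e.symm j).2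
    exact ⟨NNReal.coe_pos.2 (pos_iff_ne_zero.2 hc), hZ⟩
  · calc ∑ z ∈ Z, c z • γ z = ∑ z ∈ T, c z • γ z :=
          (sum_filter_of_ne fun z _ h ↦ (smul_ne_zero_iff.1 h).1).symm
      _ = ∑ z : T, c z • γ z := (sum_coe_sort T fun z ↦ c z • γ z).symm
      _ = ∑ j, (c (e.symm j) : ℝ) • γ (e.symm j) :=
          (e.symm.sum_comp fun z : T ↦ c z • γ z).symm

end Cone

section MomentCurve

variable {ι : Type*}

/-- The moment curve `x ↦ (x ^ d i)ᵢ` with exponents `d`: moment sequences are the integrals of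
this curve, and atomic ones are the conic combinations of its points. -/
def momentCurve (d : ι → ℕ) (x : ℝ) : ι → ℝ := fun i ↦ x ^ d i

theorem continuous_momentCurve (d : ι → ℕ) : Continuous (momentCurve d) := by
  unfold momentCurve
  fun_prop

variable [Fintype ι]

/-- The polynomial `∑ i, f(eᵢ) X ^ d i` whose values are those of the linear functional `f` along
the moment curve. It turns contact of a hyperplane with the curve into zeros of a sparse
polynomial. -/
noncomputable def dualPolynomial (d : ι → ℕ) (f : Module.Dual ℝ (ι → ℝ)) : ℝ[X] :=
  ∑ i, monomial (d i) (f (Pi.basisFun ℝ ι i))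

theorem eval_dualPolynomial (d : ι → ℕ) (f : Module.Dual ℝ (ι → ℝ)) (x : ℝ) :
    (dualPolynomial d f).eval x = f (momentCurve d x) := by
  conv_rhs => rw [← (Pi.basisFun ℝ ι).sum_repr (momentCurve d x), map_sum]
  simp [dualPolynomial, eval_finsetSum, momentCurve, mul_comm]

theorem support_dualPolynomial_subset (d : ι → ℕ) (f : Module.Dual ℝ (ι → ℝ)) :
    (dualPolynomial d f).support ⊆ univ.image d := by
  classical
  intro n hn
  simp only [dualPolynomial, mem_support_iff, finsetSum_coeff] at hn
  obtain ⟨i, -, hi⟩ := exists_ne_zero_of_sum_ne_zero hn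
  rw [coeff_monomial] at hi
  exact mem_image.2 ⟨i, mem_univ i, by_contra fun h ↦ hi (if_neg h)⟩

theorem card_support_dualPolynomial_le (d : ι → ℕ) (f : Module.Dual ℝ (ι → ℝ)) :
    #(dualPolynomial d f).support ≤ Fintype.card ι :=
  (card_le_card (support_dualPolynomial_subset d f)).trans card_image_le

theorem dualPolynomial_ne_zero {d : ι → ℕ} (hd : Function.Injective d)
    {f : Module.Dual ℝ (ι → ℝ)} (hf : f ≠ 0) : dualPolynomial d f ≠ 0 := by
  refine fun h ↦ hf ((Pi.basisFun ℝ ι).ext fun i ↦ ?_)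
  have hcoeff : (dualPolynomial d f).coeff (d i) = f (Pi.basisFun ℝ ι i) := by
    classical simp [dualPolynomial, coeff_monomial, hd.eq_iff]
  rw [← hcoeff, h, coeff_zero, LinearMap.zero_apply]

theorem linearIndepOn_momentCurve {d : ι → ℕ} (hd : Function.Injective d) {Z : Finset ℝ}
    (hZ : ∀ z ∈ Z, 0 < z) (hcard : #Z ≤ Fintype.card ι) :
    LinearIndepOn ℝ (momentCurve d) Z := by
  obtain ⟨e⟩ : Nonempty (Z ↪ ι) := Function.Embedding.nonempty_of_card_le (by simpa using hcard)
  have hspan : Submodule.span ℝ (Set.range fun z : Z ↦ momentCurve (d ∘ e) z) = ⊤ := by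
    by_contra hne
    obtain ⟨f, hf0, hf⟩ := Submodule.exists_le_ker_of_lt_top _ (lt_top_iff_ne_top.2 hne)
    have hp := dualPolynomial_ne_zero (hd.comp e.injective) hf0
    have hroot : ∀ z ∈ Z, 1 ≤ (dualPolynomial (d ∘ e) f).rootMultiplicity z := fun z hz ↦ by
      rw [Nat.one_le_iff_ne_zero, ← Nat.pos_iff_ne_zero, rootMultiplicity_pos hp, IsRoot,
        eval_dualPolynomial]
      exact hf (Submodule.subset_span ⟨⟨z, hz⟩, rfl⟩)
    have hlt := mul_card_lt_card_support hp hZ hroot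
    have hle := card_support_dualPolynomial_le (d ∘ e) f
    rw [Fintype.card_coe] at hle
    omega
  have hind : LinearIndependent ℝ fun z : Z ↦ momentCurve (d ∘ e) z :=
    linearIndependent_of_top_le_span_of_card_eq_finrank hspan.ge (by simp)
  exact LinearIndependent.of_comp (LinearMap.funLeft ℝ ℝ e) hind

theorem card_le_of_sum_momentCurve_eq {d : ι → ℕ} (hd : Function.Injective d) {Z : Finset ℝ}
    (hZ : ∀ z ∈ Z, 0 < z) (hcard : 2 * #Z ≤ Fintype.card ι + 1) {k : ℕ} {c x : Fin k → ℝ}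
    (hx : ∀ j, 0 < x j) {a : ℝ → ℝ} (ha : ∀ z ∈ Z, a z ≠ 0)
    (hsum : ∑ z ∈ Z, a z • momentCurve d z = ∑ j, c j • momentCurve d (x j)) : #Z ≤ k := by
  classical
  by_contra! hk
  let X := univ.image x
  have hX : #X ≤ k := card_image_le.trans (card_fin k).le
  obtain ⟨z, hz, hzX⟩ : ∃ z ∈ Z, z ∉ X := exists_mem_notMem_of_card_lt_card (hX.trans_lt hk)
  let W := Z.erase z ∪ X
  have hW : #(insert z W) ≤ Fintype.card ι := by
    have h₁ := card_insert_le z W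
    have h₂ : #W ≤ #(Z.erase z) + #X := card_union_le _ _
    have h₃ := card_erase_add_one hz
    omega
  have hpos : ∀ w ∈ insert z W, 0 < w := by
    simp only [W, X, mem_insert, mem_union, mem_erase, mem_image]
    rintro w (rfl | ⟨-, hw⟩ | ⟨j, -, rfl⟩)
    exacts [hZ _ hz, hZ w hw, hx j]
  have hind := linearIndepOn_momentCurve hd hpos hW
  rw [coe_insert] at hind
  refine hind.notMem_span_of_insert (by simp [W, hzX]) ?_
  have hmem : ∀ w ∈ W, momentCurve d w ∈ Submodule.span ℝ (momentCurve d '' W) :=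
    fun w hw ↦ Submodule.subset_span ⟨w, hw, rfl⟩
  have hz_eq : a z • momentCurve d z =
      ∑ j, c j • momentCurve d (x j) - ∑ w ∈ Z.erase z, a w • momentCurve d w := by
    rw [← hsum, ← add_sum_erase Z _ hz, add_sub_cancel_right]
  rw [← Submodule.smul_mem_iff _ (ha z hz), hz_eq]
  refine Submodule.sub_mem _ (Submodule.sum_mem _ fun j _ ↦ Submodule.smul_mem _ _ ?_)
    (Submodule.sum_mem _ fun w hw ↦ Submodule.smul_mem _ _ (hmem w (mem_union_left _ hw)))
  exact hmem _ (mem_union_right _ (mem_image_of_mem x (mem_univ j)))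

end MomentCurve

section DampedMomentCurve

variable {ι : Type*} [Fintype ι]

/-- A rescaling of the moment curve on `(0, ∞)` that tends to `0` at both ends, so that together
with its value `0` at `x = 0` it has compact image. -/
noncomputable def dampedMomentCurve (d : ι → ℕ) (x : ℝ) : ι → ℝ :=
  (1 + x ^ (univ.sup d + 2))⁻¹ • momentCurve (fun i ↦ d i + 1) x

theorem dampedMomentCurve_zero (d : ι → ℕ) : dampedMomentCurve d 0 = 0 := by
  ext i
  simp [dampedMomentCurve, momentCurve]

theorem dampedMomentCurve_eq_smul (d : ι → ℕ) (x : ℝ) :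
    dampedMomentCurve d x = (x / (1 + x ^ (univ.sup d + 2))) • momentCurve d x := by
  ext i
  simp only [dampedMomentCurve, momentCurve, Pi.smul_apply, smul_eq_mul]
  ring

theorem tendsto_dampedMomentCurve_atTop (d : ι → ℕ) :
    Tendsto (dampedMomentCurve d) atTop (𝓝 0) := by
  refine tendsto_pi_nhds.2 fun i ↦ ?_
  have hlt : d i + 1 < univ.sup d + 2 := by
    have := le_sup (f := d) (mem_univ i)
    omega
  refine squeeze_zero' ?_ ?_ (tendsto_pow_div_pow_atTop_zero hlt) <;>
    filter_upwards [eventually_gt_atTop 0] with x hx <;>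
    simp only [dampedMomentCurve, momentCurve, Pi.smul_apply, smul_eq_mul, inv_mul_eq_div]
  · positivity
  · gcongr
    exact le_add_of_nonneg_left zero_le_one

theorem isCompact_dampedMomentCurve_image (d : ι → ℕ) :
    IsCompact (dampedMomentCurve d '' Set.Ici 0) := by
  have hcont : Continuous fun t : NNReal ↦ dampedMomentCurve d t := by
    have hden : Continuous fun t : NNReal ↦ 1 + (t : ℝ) ^ (univ.sup d + 2) := by fun_prop
    exact (hden.inv₀ fun t ↦ by positivity).smul
      ((continuous_momentCurve _).comp NNReal.continuous_coe)
  have hlim : Tendsto (fun t : NNReal ↦ dampedMomentCurve d t) (cocompact NNReal) (𝓝 0) := by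
    rw [cocompact_eq_atTop]
    exact (tendsto_dampedMomentCurve_atTop d).comp (NNReal.tendsto_coe_atTop.2 tendsto_id)
  have hzero : 0 ∈ Set.range fun t : NNReal ↦ dampedMomentCurve d t :=
    ⟨0, by simp [dampedMomentCurve_zero]⟩
  have himage : dampedMomentCurve d '' Set.Ici 0 =
      Set.range fun t : NNReal ↦ dampedMomentCurve d t := by
    ext y
    simp [NNReal.exists]
  rw [himage, ← Set.insert_eq_of_mem hzero]
  exact hlim.isCompact_insert_range_of_cocompact hcont

theorem hull_momentCurve_le_hull_dampedMomentCurve (d : ι → ℕ) :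
    PointedCone.hull ℝ (momentCurve d '' Set.Ioi 0) ≤
      PointedCone.hull ℝ (dampedMomentCurve d '' Set.Ici 0) := by
  refine Submodule.span_le.2 ?_
  rintro _ ⟨x, hx : 0 < x, rfl⟩
  have hscale_pos : 0 < x / (1 + x ^ (univ.sup d + 2)) := by positivity
  have hmem : dampedMomentCurve d x ∈ PointedCone.hull ℝ (dampedMomentCurve d '' Set.Ici 0) :=
    Submodule.subset_span ⟨x, hx.le, rfl⟩
  rw [dampedMomentCurve_eq_smul] at hmem
  rw [← inv_smul_smul₀ hscale_pos.ne' (momentCurve d x)]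
  exact PointedCone.smul_mem _ (inv_pos.2 hscale_pos).le hmem

theorem exists_finset_maximizers_dampedMomentCurve {d : ι → ℕ} (hd : Function.Injective d)
    {f : Module.Dual ℝ (ι → ℝ)} (hf : f ≠ 0) {b : ℝ}
    (hb : ∀ x ≥ 0, f (dampedMomentCurve d x) ≤ b) :
    ∃ Z : Finset ℝ, (∀ z ∈ Z, 0 < z) ∧ 2 * #Z ≤ Fintype.card ι + 1 ∧
      ∀ x > 0, f (dampedMomentCurve d x) = b → x ∈ Z := by
  let M := univ.sup d + 2
  let q := dualPolynomial (fun i ↦ d i + 1) (-f)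
  let p : ℝ[X] := C b * X ^ 0 + C b * X ^ M + q
  have heval : ∀ x ≥ 0, p.eval x = (1 + x ^ M) * (b - f (dampedMomentCurve d x)) := by
    intro x hx
    have hden : 1 + x ^ M ≠ 0 := by positivity
    have hf_eval : (1 + x ^ M) * f (dampedMomentCurve d x) =
        f (momentCurve (fun i ↦ d i + 1) x) := by
      rw [dampedMomentCurve, map_smul, smul_eq_mul, mul_inv_cancel_left₀ hden]
    rw [mul_sub, hf_eval]
    simp only [p, q, eval_add, eval_mul, eval_C, eval_X_pow, eval_dualPolynomial,
      LinearMap.neg_apply]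
    ring
  have hp : p ≠ 0 := by
    intro h
    have hb0 : b = 0 := by simpa [h, dampedMomentCurve_zero, M] using (heval 0 le_rfl).symm
    have hq : q = 0 := by simpa [p, hb0] using h
    exact dualPolynomial_ne_zero (Nat.succ_injective.comp hd) (neg_ne_zero.2 hf) hq
  have hcard : #p.support ≤ Fintype.card ι + 2 := by
    have h₁ : p.support ⊆ {0, M} ∪ q.support :=
      support_add.trans <| union_subset_union_left (support_binomial_subset 0 M b b)
    have h₂ := card_support_dualPolynomial_le (fun i ↦ d i + 1) (-f)
    grw [h₁, card_union_le, card_le_two, h₂, add_comm]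
  have hnonneg : ∀ x > 0, 0 ≤ p.eval x := by
    intro x hx
    rw [heval x hx.le]
    exact mul_nonneg (by positivity) (sub_nonneg.2 (hb x hx.le))
  refine ⟨{x ∈ p.roots.toFinset | 0 < x}, fun z hz ↦ (mem_filter.1 hz).2, ?_, fun x hx hfx ↦ ?_⟩
  · have := two_mul_card_pos_roots_lt_card_support hp hnonneg
    omega
  · simp [hp, hx, heval x hx.le, hfx]

theorem exists_finset_mem_hull_momentCurve {d : ι → ℕ} (hd : Function.Injective d) {s : ι → ℝ}
    (hs : s ∈ PointedCone.hull ℝ (momentCurve d '' Set.Ioi 0)) :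
    ∃ Z : Finset ℝ, (∀ z ∈ Z, 0 < z) ∧ 2 * #Z ≤ Fintype.card ι + 1 ∧
      s ∈ PointedCone.hull ℝ (momentCurve d '' Z) := by
  rcases eq_or_ne s 0 with rfl | hs0
  · exact ⟨∅, by simp⟩
  let S := dampedMomentCurve d '' Set.Ici 0
  have h0S : 0 ∈ S := ⟨0, Set.mem_Ici.2 le_rfl, dampedMomentCurve_zero d⟩
  have hsS : s ∈ PointedCone.hull ℝ S := hull_momentCurve_le_hull_dampedMomentCurve d hs
  obtain ⟨r₀, hr₀, hr₀S⟩ := exists_smul_mem_convexHull h0S hsS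
  obtain ⟨r, hr, hrS, hr_int⟩ := exists_smul_mem_diff_interior
    (isCompact_convexHull (isCompact_dampedMomentCurve_image d)) hs0 hr₀S
  obtain ⟨f, hf0, hf⟩ := exists_dual_forall_le (convex_convexHull ℝ S) ⟨_, hrS⟩ hr_int
  have hfS : ∀ y ∈ S, f y ≤ f (r • s) := fun y hy ↦ hf y (subset_convexHull ℝ S hy)
  obtain ⟨Z, hZ, hcard, hmax⟩ := exists_finset_maximizers_dampedMomentCurve hd hf0
    fun x hx ↦ hfS _ ⟨x, hx, rfl⟩
  refine ⟨Z, hZ, hcard, ?_⟩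
  have hface : convexHull ℝ {y ∈ S | f y = f (r • s)} ⊆
      PointedCone.hull ℝ (momentCurve d '' Z) := by
    refine convexHull_min ?_ (PointedCone.convex _)
    rintro _ ⟨⟨x, hx : 0 ≤ x, rfl⟩, hfx⟩
    rcases hx.eq_or_lt with rfl | hx
    · simp [dampedMomentCurve_zero]
    · rw [dampedMomentCurve_eq_smul]
      exact PointedCone.smul_mem _ (by positivity)
        (Submodule.subset_span ⟨x, hmax x hx hfx, rfl⟩)
  have hrs := hface (mem_convexHull_face hrS hfS)
  have hr_pos := hr₀.trans_le hr
  simpa [smul_smul, hr_pos.ne'] using PointedCone.smul_mem _ (inv_pos.2 hr_pos).le hrs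

end DampedMomentCurve

theorem integral_mem_hull_momentCurve {ι : Type*} [Finite ι] {d : ι → ℕ}
    (hd : Function.Injective d) {μ : Measure ℝ} (hμ : μ (Set.Iic 0) = 0)
    (hint : ∀ i, Integrable (fun x ↦ x ^ d i) μ) :
    (fun i ↦ ∫ x, x ^ d i ∂μ) ∈ PointedCone.hull ℝ (momentCurve d '' Set.Ioi 0) := by
  have := Fintype.ofFinite ι
  have hγ : Integrable (momentCurve d) μ := Integrable.of_eval hint
  have hs : (fun i ↦ ∫ x, x ^ d i ∂μ) = ∫ x, momentCurve d x ∂μ :=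
    funext fun i ↦ (eval_integral hint i).symm
  rw [hs]
  by_contra hmem
  obtain ⟨f, hf0, hf, hfs⟩ := exists_dual_nonpos_of_notMem hmem
  have hcurve : ∀ x > 0, momentCurve d x ∈ PointedCone.hull ℝ (momentCurve d '' Set.Ioi 0) :=
    fun x hx ↦ Submodule.subset_span ⟨x, hx, rfl⟩
  have hpos : ∀ᵐ x ∂μ, 0 < x := by
    simpa [ae_iff, Set.Iic] using hμ
  let L := f.toContinuousLinearMap
  have hnonneg : 0 ≤ᵐ[μ] fun x ↦ -L (momentCurve d x) :=
    hpos.mono fun x hx ↦ neg_nonneg.2 (hf _ (hcurve x hx))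
  have hzero : (fun x ↦ -L (momentCurve d x)) =ᵐ[μ] 0 := by
    refine (integral_eq_zero_iff_of_nonneg_ae hnonneg (L.integrable_comp hγ).neg).1 <|
      le_antisymm ?_ (integral_nonneg_of_ae hnonneg)
    rw [integral_neg, L.integral_comp_comm hγ]
    exact neg_nonpos.2 hfs
  let Z := (dualPolynomial d f).roots.toFinset.filter (0 < ·)
  have hp : dualPolynomial d f ≠ 0 := dualPolynomial_ne_zero hd hf0
  have hZ : ∀ᵐ x ∂μ, x ∈ (Z : Set ℝ) := by
    filter_upwards [hpos, hzero] with x hx hfx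
    simpa [Z, L, hp, hx, eval_dualPolynomial] using hfx
  refine hmem ?_
  rw [← setIntegral_eq_integral_of_ae_compl_eq_zero (s := Z)
      (hZ.mono fun x hx hx' ↦ absurd hx hx'), setIntegral_finset Z hγ.integrableOn]
  exact Submodule.sum_mem _ fun z hz ↦
    PointedCone.smul_mem _ measureReal_nonneg (hcurve z (mem_filter.1 hz).2)

theorem caratheodory_number_gaps_pos_general {ι : Type*} [Fintype ι] (d : ι → ℕ)
    (hd : Function.Injective d) :
    (∀ μ : Measure ℝ, μ (Set.Iic 0) = 0 →
      (∀ i, Integrable (fun x : ℝ => x ^ d i) μ) →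
      ∃ k ≤ (Fintype.card ι + 1) / 2, ∃ (c : Fin k → ℝ) (x : Fin k → ℝ),
        (∀ j, 0 < c j ∧ 0 < x j) ∧
        ∀ i, (∫ t : ℝ, t ^ d i ∂μ) = ∑ j, c j * x j ^ d i) ∧
    (∃ μ : Measure ℝ, μ (Set.Iic 0) = 0 ∧
      (∀ i, Integrable (fun x : ℝ => x ^ d i) μ) ∧
      ∀ (k : ℕ) (c : Fin k → ℝ) (x : Fin k → ℝ),
        (∀ j, 0 < x j) →
        (∀ i, (∫ t : ℝ, t ^ d i ∂μ) = ∑ j, c j * x j ^ d i) →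
        (Fintype.card ι + 1) / 2 ≤ k) := by
  constructor
  · intro μ hμ hint
    have hmem := integral_mem_hull_momentCurve hd hμ hint
    obtain ⟨Z, hZ, hcard, hmemZ⟩ := exists_finset_mem_hull_momentCurve hd hmem
    obtain ⟨k, hk, c, x, hcx, hsum⟩ := exists_fin_of_mem_hull_image hmemZ
    refine ⟨k, by omega, c, x, fun j ↦ ⟨(hcx j).1, hZ _ (hcx j).2⟩, fun i ↦ ?_⟩
    simpa [momentCurve] using congrFun hsum i
  · obtain ⟨Z, hZ, hcard⟩ :=
      (Set.Ioi_infinite (0 : ℝ)).exists_subset_card_eq ((Fintype.card ι + 1) / 2)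
    have hint : ∀ i, ∀ z ∈ Z, Integrable (fun x : ℝ ↦ x ^ d i) (Measure.dirac z) :=
      fun i z _ ↦ integrable_dirac (by simp)
    refine ⟨∑ z ∈ Z, Measure.dirac z, ?_, fun i ↦ integrable_finsetSum_measure.2 (hint i),
      fun k c x hx hsum ↦ ?_⟩
    · simpa [Measure.finsetSum_apply] using fun z hz ↦ hZ hz
    · have hcurve : ∑ z ∈ Z, (1 : ℝ) • momentCurve d z = ∑ j, c j • momentCurve d (x j) := by
        ext i
        simpa [integral_finsetSum_measure (hint i), momentCurve] using hsum i
      rw [← hcard]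
      exact card_le_of_sum_momentCurve_eq hd (fun z hz ↦ hZ hz) (by omega) hx
        (fun _ _ ↦ one_ne_zero) hcurve

/-- The Carathéodory number of A = {x^{d₁},…,x^{d_m}} on (0,∞) equals ⌈m/2⌉:
every A-moment sequence of a measure on (0,∞) has a representing measure with at most
⌈m/2⌉ atoms in (0,∞), and some moment sequence needs ⌈m/2⌉ atoms. -/
theorem caratheodory_number_gaps_pos (m : ℕ) (hm : 0 < m) (d : Fin m → ℕ)
    (hd : StrictMono d) :
    (∀ μ : Measure ℝ, μ (Set.Iic 0) = 0 →
      (∀ i, Integrable (fun x : ℝ => x ^ d i) μ) →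
      ∃ k ≤ (m + 1) / 2, ∃ (c : Fin k → ℝ) (x : Fin k → ℝ),
        (∀ j, 0 < c j ∧ 0 < x j) ∧
        ∀ i, (∫ t : ℝ, t ^ d i ∂μ) = ∑ j, c j * x j ^ d i) ∧
    (∃ μ : Measure ℝ, μ (Set.Iic 0) = 0 ∧
      (∀ i, Integrable (fun x : ℝ => x ^ d i) μ) ∧
      ∀ (k : ℕ) (c : Fin k → ℝ) (x : Fin k → ℝ),
        (∀ j, 0 < c j ∧ 0 < x j) →
        (∀ i, (∫ t : ℝ, t ^ d i ∂μ) = ∑ j, c j * x j ^ d i) →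
        (m + 1) / 2 ≤ k) := by
  have hgen := caratheodory_number_gaps_pos_general d hd.injective
  rw [Fintype.card_fin] at hgen
  exact hgen.imp_right fun ⟨μ, hμ, hint, hlower⟩ ↦
    ⟨μ, hμ, hint, fun k c x hcx ↦ hlower k c x fun j ↦ (hcx j).2⟩
end
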